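/- There exists a planar graph that is not 4-list colorable; that is, there exist a planar graph G and a list assignment L with |L(v)| = 4 for all vertices v such that G admits no L-coloring. -/

import Mathlib

/-!
The graph is glued from sixteen copies of a planar gadget on ten vertices along an edge joining two
poles. The poles have disjoint lists, and each pair `(a, b)` of colors for them has its own copy.
In this copy the vertices `2` and `3`, which are adjacent to each other and to both poles, have the
list `{a, b, 8, 9}` and so receive `8` and `9` in some order. Each of the two faces formed by `2`,
`3` and a pole contains a triangle that fills it to an octahedron. Each vertex of such a triangle is
adjacent to two vertices of its face, and the lists are such that for one order of `8` and `9` the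
triangle at the first pole, and for the other order the triangle at the second pole, is left with
the colors `10` and `11` only, which do not suffice (`glued_not_colorable`).

Planarity means that there is no `K₅`- or `K₃,₃`-minor. It rests on `HasMinor.collapse`: a part of
the graph that is attached along a clique, and contains at most one branch set, may be contracted
to a vertex, or deleted if it contains none. Since `K₅` and `K₃,₃` are 3-connected, the branch sets
avoiding the poles all lie in one gadget, and the other gadgets can be deleted (`glued_minor`). In
the gadget, the two triangles inside the octahedra are contracted one after the other
(`HasMinor.contract_filling`). This fails only if two branch sets lie inside such a triangle. Then
at most one branch set avoids the octahedron, and contracting everything outside of it to a vertex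
attached to one of its faces leaves a minor of a graph on seven vertices. It remains to exclude
`K₅` and `K₃,₃` as minors of graphs on six and seven vertices, where all but at most one vertex
represent different branch sets, so that a finite search decides the matter.
-/

open SimpleGraph

/-- The degree of a vertex `v` in `G` (as the cardinality of its neighborhood). -/
noncomputable def vdeg {V : Type*} (G : SimpleGraph V) (v : V) : ℕ :=
  (G.neighborSet v).ncard

/-- `G` has an `H`-minor: there are nonempty, pairwise disjoint, connected branch sets
`B i` in `G`, one for each vertex `i` of `H`, such that whenever `i` and `j` are adjacent
in `H` there is an edge of `G` between `B i` and `B j`. -/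
def HasMinor {V W : Type*} (G : SimpleGraph V) (H : SimpleGraph W) : Prop :=
  ∃ B : W → Set V,
    (∀ i, (B i).Nonempty) ∧
    (∀ i, (G.induce (B i)).Connected) ∧
    (Pairwise fun i j => Disjoint (B i) (B j)) ∧
    (∀ i j, H.Adj i j → ∃ u ∈ B i, ∃ v ∈ B j, G.Adj u v)

/-- `G` has no `K₅`-minor. -/
def K5MinorFree {V : Type*} (G : SimpleGraph V) : Prop :=
  ¬ HasMinor G (completeGraph (Fin 5))

/-- Planarity, encoded via Wagner's theorem: no `K₅`-minor and no `K₃,₃`-minor. -/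
def IsPlanar {V : Type*} (G : SimpleGraph V) : Prop :=
  ¬ HasMinor G (completeGraph (Fin 5)) ∧
  ¬ HasMinor G (completeBipartiteGraph (Fin 3) (Fin 3))

/-- Outerplanarity, encoded via the forbidden-minor characterization:
no `K₄`-minor and no `K₂,₃`-minor. -/
def IsOuterplanar {V : Type*} (G : SimpleGraph V) : Prop :=
  ¬ HasMinor G (completeGraph (Fin 4)) ∧
  ¬ HasMinor G (completeBipartiteGraph (Fin 2) (Fin 3))

/-- `φ` is a proper coloring of `G` choosing each color from the list `L v`. -/
def IsListColoring {V : Type*} (G : SimpleGraph V) (L : V → Finset ℕ) (φ : V → ℕ) : Prop :=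
  (∀ v, φ v ∈ L v) ∧ ∀ u v, G.Adj u v → φ u ≠ φ v

/-- `G` is `k`-connected: more than `k` vertices, and deleting any set of fewer than `k`
vertices leaves a connected graph. -/
def KConnected {V : Type*} [Fintype V] (k : ℕ) (G : SimpleGraph V) : Prop :=
  k < Fintype.card V ∧ ∀ S : Set V, S.ncard < k → (G.induce (Sᶜ : Set V)).Connected

/-- The induced subgraph on `B` has no cut vertex. -/
def NoCutVertex {V : Type*} (G : SimpleGraph V) (B : Set V) : Prop :=
  ∀ v ∈ B, (B \ {v}).Nonempty → (G.induce (B \ {v})).Connected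

/-- `B` is (the vertex set of) a block of `G`: a maximal set inducing a connected
subgraph with no cut vertex. -/
def IsBlock {V : Type*} (G : SimpleGraph V) (B : Set V) : Prop :=
  (G.induce B).Connected ∧ NoCutVertex G B ∧
    ∀ B' : Set V, B ⊆ B' → (G.induce B').Connected → NoCutVertex G B' → B' = B

/-- `B` induces a complete subgraph of `G`. -/
def IsCompleteSet {V : Type*} (G : SimpleGraph V) (B : Set V) : Prop :=
  ∀ u ∈ B, ∀ v ∈ B, u ≠ v → G.Adj u v

/-- `B` induces an odd cycle in `G`: a connected `2`-regular induced subgraph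
on an odd number (at least 3) of vertices. -/
def IsOddCycleSet {V : Type*} (G : SimpleGraph V) (B : Set V) : Prop :=
  Odd B.ncard ∧ 3 ≤ B.ncard ∧ (G.induce B).Connected ∧
    ∀ v ∈ B, (G.neighborSet v ∩ B).ncard = 2

/-- A Gallai tree: a connected graph each of whose blocks is a complete graph
or an odd cycle. -/
def IsGallaiTree {V : Type*} (G : SimpleGraph V) : Prop :=
  G.Connected ∧ ∀ B : Set V, IsBlock G B → IsCompleteSet G B ∨ IsOddCycleSet G B

open Classical in
/-- The minimum distance (in `G`) between two distinct connected components of the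
induced subgraph `G[S]`; it is `0` if `G[S]` has at most one component. -/
noncomputable def compDist {V : Type*} (G : SimpleGraph V) (S : Set V) : ℕ∞ :=
  if ∀ u v : S, (G.induce S).Reachable u v then 0
  else ⨅ (u : S) (v : S) (_ : ¬ (G.induce S).Reachable u v), G.edist u.1 v.1

/-- `S k` is the set of vertices of degree less than `k`. -/
def SmallDeg {V : Type*} (G : SimpleGraph V) (k : ℕ) : Set V :=
  {v | vdeg G v < k}

/-! ### Transferring minors -/

/-- If `B` induces a connected subgraph and meets `Y` without being contained in it, then `B` meets
every set `S` that separates `Y` from the rest of the graph. -/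
lemma meets_of_connected {V : Type*} {G : SimpleGraph V} {B Y S : Set V}
    (hB : (G.induce B).Connected)
    (hN : ∀ y ∈ Y, ∀ z, G.Adj y z → z ∈ Y ∨ z ∈ S)
    (hm : ∃ u ∈ B, u ∈ Y) (h : ¬ B ⊆ Y) : ∃ s ∈ B, s ∈ S := by
  by_contra hS
  push Not at hS
  obtain ⟨u, huB, huY⟩ := hm
  apply h
  intro x hx
  have hr := (SimpleGraph.reachable_iff_reflTransGen _ _).1 (hB.preconnected ⟨u, huB⟩ ⟨x, hx⟩)
  suffices H : ∀ x : B, Relation.ReflTransGen (G.induce B).Adj ⟨u, huB⟩ x → (x : V) ∈ Y from H _ hr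
  intro x hx
  induction hx with
  | refl => exact huY
  | tail _ hadj ih =>
    rcases hN _ ih _ hadj with h | h
    · exact h
    · exact absurd h (hS _ (Subtype.prop _))

/-- A model of `H` in `G` is carried to a model of `H` in `G'` by maps `r i`, one for each branch
set, that send edges to edges or to single vertices and keep the branch sets disjoint. -/
lemma HasMinor.transfer {V V' W : Type*} {G : SimpleGraph V} {G' : SimpleGraph V'}
    {H : SimpleGraph W} {B : W → Set V}
    (hne : ∀ i, (B i).Nonempty)
    (hc : ∀ i, (G.induce (B i)).Connected)
    (hadj : ∀ i j, H.Adj i j → ∃ u ∈ B i, ∃ v ∈ B j, G.Adj u v)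
    (r : W → V → V')
    (h1 : ∀ i j, ∀ u ∈ B i, ∀ v ∈ B j, G.Adj u v → r i u = r j v ∨ G'.Adj (r i u) (r j v))
    (h2 : ∀ i j, i ≠ j → ∀ u ∈ B i, ∀ v ∈ B j, r i u ≠ r j v) :
    HasMinor G' H := by
  refine ⟨fun i => r i '' B i, fun i => (hne i).image _, fun i => ?_, fun i j hij => ?_, ?_⟩
  · have : Nonempty (r i '' B i) := ((hne i).image _).to_subtype
    refine ⟨?_⟩
    rintro ⟨_, u, hu, rfl⟩ ⟨_, v, hv, rfl⟩
    have hr := (SimpleGraph.reachable_iff_reflTransGen _ _).1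
      ((hc i).preconnected ⟨u, hu⟩ ⟨v, hv⟩)
    suffices K : ∀ x : B i, Relation.ReflTransGen (G.induce (B i)).Adj ⟨u, hu⟩ x →
        (G'.induce (r i '' B i)).Reachable ⟨r i u, u, hu, rfl⟩ ⟨r i x, x, x.2, rfl⟩ from K _ hr
    intro x hx
    induction hx with
    | refl => exact SimpleGraph.Reachable.refl _
    | @tail x y _ hxy ih =>
      refine ih.trans ?_
      rcases h1 i i x x.2 y y.2 hxy with h | h
      · have : (⟨r i x, x, x.2, rfl⟩ : r i '' B i) = ⟨r i y, y, y.2, rfl⟩ := Subtype.ext h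
        rw [this]
      · exact SimpleGraph.Adj.reachable (G := G'.induce (r i '' B i)) h
  · refine Set.disjoint_left.2 ?_
    rintro _ ⟨u, hu, rfl⟩ ⟨v, hv, hvu⟩
    exact h2 i j hij u hu v hv hvu.symm
  · intro i j hij
    obtain ⟨u, hu, v, hv, huv⟩ := hadj i j hij
    exact ⟨_, ⟨u, hu, rfl⟩, _, ⟨v, hv, rfl⟩,
      (h1 i j u hu v hv huv).resolve_left (h2 i j hij.ne u hu v hv)⟩

/-- Let the clique `S` separate `Y` from the rest of `G`. If at most one branch set lies inside `Y`,
then `Y` may be replaced by a single vertex `w` joined to `S` (or deleted, if no branch set lies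
inside `Y`): branch sets that merely pass through `Y` can be rerouted through the clique. The map
`f` identifies `G` minus `Y` with a part of the new graph `G'`. -/
lemma HasMinor.collapse {V V' W : Type*} {G : SimpleGraph V} {G' : SimpleGraph V'}
    {H : SimpleGraph W} {B : W → Set V}
    (hne : ∀ i, (B i).Nonempty)
    (hc : ∀ i, (G.induce (B i)).Connected)
    (hd : Pairwise fun i j => Disjoint (B i) (B j))
    (hadj : ∀ i j, H.Adj i j → ∃ u ∈ B i, ∃ v ∈ B j, G.Adj u v)
    (Y S : Set V) (f : V → V') (w : V')
    (hSY : ∀ s ∈ S, s ∉ Y)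
    (hS : ∀ s ∈ S, ∀ t ∈ S, s ≠ t → G.Adj s t)
    (hN : ∀ y ∈ Y, ∀ z, G.Adj y z → z ∈ Y ∨ z ∈ S)
    (hinj : ∀ u v, u ∉ Y → v ∉ Y → f u = f v → u = v)
    (hhom : ∀ u v, u ∉ Y → v ∉ Y → G.Adj u v → G'.Adj (f u) (f v))
    (hw : ∀ i, B i ⊆ Y → (∀ u, u ∉ Y → f u ≠ w) ∧ ∀ s ∈ S, G'.Adj w (f s))
    (huniq : ∀ i j, B i ⊆ Y → B j ⊆ Y → i = j) :
    HasMinor G' H := by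
  classical
  have hdisj : ∀ i j, i ≠ j → ∀ u, u ∈ B i → u ∉ B j := fun i j hij u hi hj =>
    Set.disjoint_left.1 (hd hij) hi hj
  have hs : ∀ i, ∃ s, ¬ B i ⊆ Y → (∃ u ∈ B i, u ∈ Y) → s ∈ B i ∧ s ∈ S := by
    intro i
    by_cases h : ¬ B i ⊆ Y ∧ ∃ u ∈ B i, u ∈ Y
    · obtain ⟨s, h1, h2⟩ := meets_of_connected (hc i) hN h.2 h.1
      exact ⟨s, fun _ _ => ⟨h1, h2⟩⟩
    · exact ⟨(hne i).some, fun h1 h2 => absurd ⟨h1, h2⟩ h⟩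
  choose s hs using hs
  -- The vertex of `B i` outside `Y` that represents `u`.
  set p : W → V → V := fun i u => if u ∈ Y then s i else u with hp
  have hpY : ∀ i, ¬ B i ⊆ Y → ∀ u ∈ B i, p i u ∈ B i ∧ p i u ∉ Y ∧ (u ∈ Y → p i u ∈ S) ∧
      (u ∉ Y → p i u = u) := by
    intro i hi u hu
    by_cases h : u ∈ Y
    · have := hs i hi ⟨u, hu, h⟩
      simp only [hp, h, if_true]
      exact ⟨this.1, hSY _ this.2, fun _ => this.2, fun h' => absurd trivial h'⟩
    · simp [hp, h, hu]
  -- Vertices of branch sets not inside `Y` that are adjacent stay adjacent or become equal.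
  have hpadj : ∀ i j, ¬ B i ⊆ Y → ¬ B j ⊆ Y → ∀ u ∈ B i, ∀ v ∈ B j, G.Adj u v →
      p i u = p j v ∨ G.Adj (p i u) (p j v) := by
    intro i j hi hj u hu v hv huv
    obtain ⟨-, -, a3, a4⟩ := hpY i hi u hu
    obtain ⟨-, -, b3, b4⟩ := hpY j hj v hv
    by_cases hpq : p i u = p j v
    · exact Or.inl hpq
    right
    by_cases h : u ∈ Y <;> by_cases h' : v ∈ Y
    · exact hS _ (a3 h) _ (b3 h') hpq
    · refine hS _ (a3 h) _ ?_ hpq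
      rw [b4 h']
      exact (hN _ h _ huv).resolve_left h'
    · refine hS _ ?_ _ (b3 h') hpq
      rw [a4 h]
      exact (hN _ h' _ huv.symm).resolve_left h
    · rw [a4 h, b4 h']; exact huv
  -- A neighbour of a branch set inside `Y` is represented by a vertex of `S`.
  have hpS : ∀ j, ¬ B j ⊆ Y → ∀ u ∈ Y, ∀ v ∈ B j, G.Adj u v → p j v ∈ S := by
    intro j hj u hu v hv huv
    obtain ⟨-, -, b3, b4⟩ := hpY j hj v hv
    by_cases h : v ∈ Y
    · exact b3 h
    · rw [b4 h]; exact (hN _ hu _ huv).resolve_left h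
  refine HasMinor.transfer hne hc hadj (fun i u => if B i ⊆ Y then w else f (p i u)) ?_ ?_
  · intro i j u hu v hv huv
    by_cases hi : B i ⊆ Y <;> by_cases hj : B j ⊆ Y <;> simp only [hi, hj, if_true, if_false]
    · exact Or.inl trivial
    · exact Or.inr ((hw i hi).2 _ (hpS j hj u (hi hu) v hv huv))
    · exact Or.inr ((hw j hj).2 _ (hpS i hi v (hj hv) u hu huv.symm)).symm
    · rcases hpadj i j hi hj u hu v hv huv with h | h
      · exact Or.inl (by rw [h])
      · exact Or.inr (hhom _ _ (hpY i hi u hu).2.1 (hpY j hj v hv).2.1 h)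
  · intro i j hij u hu v hv
    by_cases hi : B i ⊆ Y <;> by_cases hj : B j ⊆ Y <;> simp only [hi, hj, if_true, if_false]
    · exact absurd (huniq i j hi hj) hij
    · exact ((hw i hi).1 _ (hpY j hj v hv).2.1).symm
    · exact (hw j hj).1 _ (hpY i hi u hu).2.1
    · intro h
      have := hinj _ _ (hpY i hi u hu).2.1 (hpY j hj v hv).2.1 h
      exact hdisj i j hij _ (hpY i hi u hu).1 (this ▸ (hpY j hj v hv).1)

/-- A minor with one vertex fewer than its host is found by choosing a vertex `b i` in each branch
set; the one remaining vertex `z` is either unused or contracted into its neighbour `b l`. -/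
lemma HasMinor.exists_of_card {V W : Type*} [Fintype V] [Fintype W] [Nonempty W]
    {G : SimpleGraph V} {H : SimpleGraph W} (hcard : Fintype.card V = Fintype.card W + 1)
    (hm : HasMinor G H) :
    ∃ (b : W → V) (z : V) (l : W), Function.Injective b ∧ (∀ i, b i ≠ z) ∧
      (∀ v, v ≠ z → ∃ i, b i = v) ∧
      ∀ i j, H.Adj i j → G.Adj (b i) (b j) ∨
        (G.Adj z (b l) ∧ (i = l ∧ G.Adj z (b j) ∨ j = l ∧ G.Adj z (b i))) := by
  classical
  obtain ⟨B, hne, hc, hd, hadj⟩ := hm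
  have hdisj : ∀ i j u, u ∈ B i → u ∈ B j → i = j := fun i j u hi hj => by
    by_contra hij
    exact Set.disjoint_left.1 (hd hij) hi hj
  choose b hb using hne
  have hinj : Function.Injective b := fun i j h => hdisj i j (b i) (hb i) (h ▸ hb j)
  have hz : ((Finset.univ.image b)ᶜ).card = 1 := by
    rw [Finset.card_compl, Finset.card_image_of_injective _ hinj, Finset.card_univ, hcard]
    omega
  obtain ⟨z, hz⟩ := Finset.card_eq_one.1 hz
  have hz' : ∀ v, (∀ i, b i ≠ v) ↔ v = z := fun v => by
    have := Finset.ext_iff.1 hz v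
    simpa using this
  have hbz : ∀ i, b i ≠ z := (hz' z).2 rfl
  have hcov : ∀ v, v ≠ z → ∃ i, b i = v := fun v hv => by
    by_contra h
    push Not at h
    exact hv ((hz' v).1 h)
  have hB : ∀ i, ∀ u ∈ B i, u = b i ∨ u = z := fun i u hu => by
    by_cases h : u = z
    · exact Or.inr h
    · obtain ⟨j, rfl⟩ := hcov u h
      rw [hdisj i j _ hu (hb j)]
      exact Or.inl rfl
  by_cases hl : ∃ l, z ∈ B l
  · obtain ⟨l, hl⟩ := hl
    have hzl : G.Adj z (b l) := by
      by_contra hn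
      obtain ⟨s, hs, hs'⟩ := meets_of_connected (hc l) (Y := {z}) (S := {u | G.Adj z u})
        (fun y hy v hv => Or.inr (by rw [Set.mem_singleton_iff.1 hy] at hv; exact hv))
        ⟨z, hl, rfl⟩ (fun h => hbz l (h (hb l)))
      rcases hB l s hs with rfl | rfl
      · exact hn hs'
      · exact G.loopless.irrefl _ hs'
    refine ⟨b, z, l, hinj, hbz, hcov, fun i j hij => ?_⟩
    obtain ⟨u, hu, v, hv, huv⟩ := hadj i j hij
    rcases hB i u hu with rfl | rfl
    · rcases hB j v hv with rfl | rfl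
      · exact Or.inl huv
      · exact Or.inr ⟨hzl, Or.inr ⟨hdisj j l _ hv hl, huv.symm⟩⟩
    · rcases hB j v hv with rfl | rfl
      · exact Or.inr ⟨hzl, Or.inl ⟨hdisj i l _ hu hl, huv⟩⟩
      · exact absurd huv (G.loopless.irrefl _)
  · refine ⟨b, z, Classical.arbitrary W, hinj, hbz, hcov, fun i j hij => ?_⟩
    obtain ⟨u, hu, v, hv, huv⟩ := hadj i j hij
    rcases hB i u hu with rfl | rfl
    · rcases hB j v hv with rfl | rfl
      · exact Or.inl huv
      · exact absurd ⟨_, hv⟩ hl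
    · exact absurd ⟨_, hu⟩ hl

/-! ### The small graphs -/

/-- The graph on `Fin n` with edge list `E`. -/
def graphOf {n : ℕ} (E : List (Fin n × Fin n)) : SimpleGraph (Fin n) where
  Adj a b := a ≠ b ∧ ((a, b) ∈ E ∨ (b, a) ∈ E)
  symm := ⟨fun _ _ h => ⟨h.1.symm, h.2.symm⟩⟩
  loopless := ⟨fun _ h => h.1 rfl⟩

instance {n : ℕ} (E : List (Fin n × Fin n)) : DecidableRel (graphOf E).Adj :=
  fun a b => inferInstanceAs (Decidable (a ≠ b ∧ ((a, b) ∈ E ∨ (b, a) ∈ E)))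

/-- The gadget: a `K₄` on the poles `0`, `1` and the vertices `2`, `3`, in which the face `1 2 3` is
filled by the triangle `4 5 6` and the face `0 2 3` by the triangle `7 8 9`, so that each of these
two faces becomes an octahedron. -/
def gadget : SimpleGraph (Fin 10) := graphOf
  [(0, 1), (0, 2), (0, 3), (1, 2), (1, 3), (2, 3),
   (4, 1), (4, 2), (5, 2), (5, 3), (6, 3), (6, 1), (4, 5), (5, 6), (4, 6),
   (7, 0), (7, 2), (8, 2), (8, 3), (9, 3), (9, 0), (7, 8), (8, 9), (7, 9)]

/-- The gadget with the triangle `7 8 9` contracted to the vertex `7`. -/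
def gadget₁ : SimpleGraph (Fin 8) := graphOf
  [(0, 1), (0, 2), (0, 3), (1, 2), (1, 3), (2, 3),
   (4, 1), (4, 2), (5, 2), (5, 3), (6, 3), (6, 1), (4, 5), (5, 6), (4, 6),
   (7, 0), (7, 2), (7, 3)]

/-- The gadget with both inner triangles contracted, `4 5 6` to the vertex `4` and `7 8 9` to the
vertex `5`. -/
def gadget₂ : SimpleGraph (Fin 6) := graphOf
  [(0, 1), (0, 2), (0, 3), (1, 2), (1, 3), (2, 3),
   (4, 1), (4, 2), (4, 3), (5, 0), (5, 2), (5, 3)]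

/-- The octahedron, with opposite faces `0 1 2` and `3 4 5`. -/
def octahedron : SimpleGraph (Fin 6) := graphOf
  [(0, 1), (1, 2), (0, 2), (3, 0), (3, 1), (4, 1), (4, 2), (5, 2), (5, 0), (3, 4), (4, 5), (3, 5)]

/-- The octahedron with a further vertex `6` joined to the face `0 1 2`. -/
def octahedron₇ : SimpleGraph (Fin 7) := graphOf
  [(0, 1), (1, 2), (0, 2), (3, 0), (3, 1), (4, 1), (4, 2), (5, 2), (5, 0), (3, 4), (4, 5), (3, 5),
   (6, 0), (6, 1), (6, 2)]

instance : DecidableRel gadget.Adj := inferInstanceAs (DecidableRel (graphOf _).Adj)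
instance : DecidableRel gadget₁.Adj := inferInstanceAs (DecidableRel (graphOf _).Adj)
instance : DecidableRel gadget₂.Adj := inferInstanceAs (DecidableRel (graphOf _).Adj)
instance : DecidableRel octahedron.Adj := inferInstanceAs (DecidableRel (graphOf _).Adj)
instance : DecidableRel octahedron₇.Adj := inferInstanceAs (DecidableRel (graphOf _).Adj)

/-- A `K₅`-minor of a graph on six vertices consists of four vertices that form a clique and a fifth
vertex `t` such that, possibly after contracting an edge from the last vertex `z` to `t`, all four
are joined to `t`. -/
lemma K5_of_card_six {G : SimpleGraph (Fin 6)} (h : HasMinor G (completeGraph (Fin 5))) :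
    ∃ z t : Fin 6, z ≠ t ∧
      (∀ p q, p ≠ z → p ≠ t → q ≠ z → q ≠ t → p ≠ q → G.Adj p q) ∧
      ∀ p, p ≠ z → p ≠ t → G.Adj t p ∨ G.Adj z t ∧ G.Adj z p := by
  obtain ⟨b, z, l, hinj, hbz, hcov, hadj⟩ := h.exists_of_card (by simp)
  refine ⟨z, b l, (hbz l).symm, ?_, ?_⟩
  · intro p q hpz hpt hqz hqt hpq
    obtain ⟨i, rfl⟩ := hcov p hpz
    obtain ⟨j, rfl⟩ := hcov q hqz
    rcases hadj i j (fun h => hpq (by rw [h])) with h | ⟨-, ⟨rfl, -⟩ | ⟨rfl, -⟩⟩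
    · exact h
    · exact absurd rfl hpt
    · exact absurd rfl hqt
  · intro p hpz hpt
    obtain ⟨i, rfl⟩ := hcov p hpz
    rcases hadj l i (fun h => hpt (by rw [h])) with h | ⟨h, ⟨-, h'⟩ | ⟨rfl, -⟩⟩
    · exact Or.inl h
    · exact Or.inr ⟨h, h'⟩
    · exact absurd rfl hpt

set_option synthInstance.maxSize 2000 in
set_option synthInstance.maxHeartbeats 200000 in
lemma octahedron_K5 : ¬ HasMinor octahedron (completeGraph (Fin 5)) := fun h => by
  exact absurd (K5_of_card_six h) (by decide +kernel)

set_option synthInstance.maxSize 2000 in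
set_option synthInstance.maxHeartbeats 200000 in
lemma gadget₂_K5 : ¬ HasMinor gadget₂ (completeGraph (Fin 5)) := fun h => by
  exact absurd (K5_of_card_six h) (by decide +kernel)

/-- The vertex `6` has degree three and its neighbourhood is a clique, so it can be deleted without
destroying a `K₅`-minor. -/
lemma octahedron₇_K5 : ¬ HasMinor octahedron₇ (completeGraph (Fin 5)) := by
  rintro ⟨B, hne, hc, hd, hadj⟩
  have key : ∀ i, ¬ B i ⊆ {v | v = 6} := by
    intro i hi
    -- The four other branch sets contain distinct neighbours of `6`.
    have h1 : ∀ j, ∃ v : Fin 7, j ≠ i → v ∈ B j ∧ (v : ℕ) < 3 := by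
      intro j
      by_cases hj : j = i
      · exact ⟨0, fun h => absurd hj h⟩
      · obtain ⟨u, hu, v, hv, huv⟩ := hadj i j (Ne.symm hj)
        have hu6 : u = 6 := hi hu
        subst hu6
        exact ⟨v, fun _ => ⟨hv, by clear hv; revert v; decide⟩⟩
    choose g hg using h1
    have := Finset.card_le_card_of_injOn (s := Finset.univ.erase i) (t := Finset.range 3)
      (fun j => (g j : ℕ)) (fun j hj => by
        simpa using (hg j (Finset.ne_of_mem_erase hj)).2)
      (fun j hj k hk hjk => by
        by_contra hne
        refine Set.disjoint_left.1 (hd hne) (hg j (Finset.ne_of_mem_erase hj)).1 ?_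
        rw [Fin.ext hjk]
        exact (hg k (Finset.ne_of_mem_erase hk)).1)
    simp at this
  exact octahedron_K5 (HasMinor.collapse hne hc hd hadj {v | v = 6} {v | (v : ℕ) < 3}
    (fun v => if h : (v : ℕ) < 6 then ⟨v, h⟩ else 0) 0
    (by simp only [Set.mem_ofPred_eq]; decide) (by simp only [Set.mem_ofPred_eq]; decide)
    (by simp only [Set.mem_ofPred_eq]; decide) (by simp only [Set.mem_ofPred_eq]; decide)
    (by simp only [Set.mem_ofPred_eq]; decide)
    (fun i hi => absurd hi (key i)) (fun i _ hi => absurd hi (key i)))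

/-- The form of a `K₃,₃`-minor of a graph on seven vertices that is suited to an exhaustive search:
`q₁`, `q₂`, `q₃` represent one side, and `z` is unused or contracted into `t`. -/
lemma K33_of_card_seven {G : SimpleGraph (Fin 7)}
    (h : HasMinor G (completeBipartiteGraph (Fin 3) (Fin 3))) :
    ∃ z q₁ q₂ q₃ : Fin 7, (q₁ < q₂ ∧ q₂ < q₃ ∧ q₁ ≠ z ∧ q₂ ≠ z ∧ q₃ ≠ z) ∧ ∃ t : Fin 7,
      ∀ c, c ≠ z → c ≠ q₁ → c ≠ q₂ → c ≠ q₃ → ∀ q ∈ [q₁, q₂, q₃],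
        G.Adj q c ∨ G.Adj z t ∧ (q = t ∧ G.Adj z c ∨ c = t ∧ G.Adj z q) := by
  obtain ⟨b, z, l, hinj, hbz, hcov, hadj⟩ := h.exists_of_card (by simp)
  let σ := Tuple.sort fun i => b (.inl i)
  have hσ : StrictMono fun i => b (.inl (σ i)) :=
    (Tuple.monotone_sort fun i => b (.inl i)).strictMono_of_injective
      (hinj.comp (Sum.inl_injective.comp σ.injective))
  refine ⟨z, b (.inl (σ 0)), b (.inl (σ 1)), b (.inl (σ 2)),
    ⟨hσ (by decide), hσ (by decide), hbz _, hbz _, hbz _⟩, b l, ?_⟩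
  intro c hcz h0 h1 h2 q hq
  obtain ⟨j, rfl⟩ := hcov c hcz
  have hq' : ∃ i, q = b (.inl i) := by
    simp only [List.mem_cons, List.not_mem_nil, or_false] at hq
    rcases hq with h | h | h <;> exact ⟨_, h⟩
  obtain ⟨i, rfl⟩ := hq'
  rcases j with j | j
  · obtain ⟨j, rfl⟩ := σ.surjective j
    fin_cases j
    · exact absurd rfl h0
    · exact absurd rfl h1
    · exact absurd rfl h2
  · rcases hadj (.inl i) (.inr j) (by simp) with h | ⟨h, ⟨rfl, h'⟩ | ⟨rfl, h'⟩⟩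
    · exact Or.inl h
    · exact Or.inr ⟨h, Or.inl ⟨rfl, h'⟩⟩
    · exact Or.inr ⟨h, Or.inr ⟨rfl, h'⟩⟩

set_option synthInstance.maxSize 2000 in
set_option synthInstance.maxHeartbeats 200000 in
lemma octahedron₇_K33 : ¬ HasMinor octahedron₇ (completeBipartiteGraph (Fin 3) (Fin 3)) :=
  fun h => by
  exact absurd (K33_of_card_seven h) (by decide +kernel)

set_option synthInstance.maxSize 2000 in
set_option synthInstance.maxHeartbeats 200000 in
/-- `gadget₂` is regarded as a graph on seven vertices by adding an isolated vertex. -/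
lemma gadget₂_K33 : ¬ HasMinor gadget₂ (completeBipartiteGraph (Fin 3) (Fin 3)) := by
  rintro ⟨B, hne, hc, hd, hadj⟩
  let G₇ : SimpleGraph (Fin 7) := graphOf
    [(0, 1), (0, 2), (0, 3), (1, 2), (1, 3), (2, 3), (4, 1), (4, 2), (4, 3), (5, 0), (5, 2), (5, 3)]
  have hG : ∀ u v, gadget₂.Adj u v → G₇.Adj u.castSucc v.castSucc := by decide
  have h : HasMinor G₇ (completeBipartiteGraph (Fin 3) (Fin 3)) :=
    HasMinor.transfer hne hc hadj (fun _ => Fin.castSucc)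
      (fun _ _ u _ v _ huv => Or.inr (hG u v huv))
      (fun i j hij u hu v hv huv => Set.disjoint_left.1 (hd hij) hu
        (Fin.castSucc_injective _ huv ▸ hv))
  exact absurd (K33_of_card_seven h) (by decide +kernel)

/-! ### Planarity of the gadget -/

/-- Contraction of an octahedral filling. Let the clique `P` separate `Y` from the rest of `G`,
where `Y ∪ P` maps by `g` to the octahedron, `P` to the face `0 1 2`. If two branch sets of a model
of `H` lie inside `Y`, then at most one branch set avoids `Y ∪ P` by `hH`, and contracting the
outside of `Y ∪ P` to the vertex `6` leaves an `H`-minor of `octahedron₇`. Otherwise `Y` can be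
contracted to a single vertex `w`. -/
lemma HasMinor.contract_filling {V V' W : Type*} {G : SimpleGraph V} {G' : SimpleGraph V'}
    {H : SimpleGraph W}
    (hH : ∀ i j, i ≠ j → ∀ l m, l ≠ i → l ≠ j → m ≠ i → m ≠ j → ¬ H.Adj i l → ¬ H.Adj j l →
      ¬ H.Adj i m → ¬ H.Adj j m → l = m)
    (h7 : ¬ HasMinor octahedron₇ H)
    (Y P : Set V) (f : V → V') (w : V') (g : V → Fin 7)
    (hPY : ∀ s ∈ P, s ∉ Y)
    (hP : ∀ s ∈ P, ∀ t ∈ P, s ≠ t → G.Adj s t)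
    (hN : ∀ y ∈ Y, ∀ z, G.Adj y z → z ∈ Y ∨ z ∈ P)
    (finj : ∀ u v, u ∉ Y → v ∉ Y → f u = f v → u = v)
    (fhom : ∀ u v, u ∉ Y → v ∉ Y → G.Adj u v → G'.Adj (f u) (f v))
    (hfw : ∀ u, u ∉ Y → f u ≠ w) (hwP : ∀ s ∈ P, G'.Adj w (f s))
    (ginj : ∀ u v, (u ∈ Y ∨ u ∈ P) → (v ∈ Y ∨ v ∈ P) → g u = g v → u = v)
    (ghom : ∀ u v, (u ∈ Y ∨ u ∈ P) → (v ∈ Y ∨ v ∈ P) → G.Adj u v → octahedron₇.Adj (g u) (g v))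
    (hg6 : ∀ u, (u ∈ Y ∨ u ∈ P) → g u ≠ 6) (h6P : ∀ s ∈ P, octahedron₇.Adj 6 (g s))
    (hm : HasMinor G H) : HasMinor G' H := by
  obtain ⟨B, hne, hc, hd, hadj⟩ := hm
  by_cases huniq : ∀ i j, B i ⊆ Y → B j ⊆ Y → i = j
  · exact HasMinor.collapse hne hc hd hadj Y P f w hPY hP hN finj fhom
      (fun _ _ => ⟨hfw, hwP⟩) huniq
  exfalso
  push Not at huniq
  obtain ⟨i, j, hi, hj, hij⟩ := huniq
  -- A branch set outside `Y ∪ P` differs from, and is not adjacent to, one inside `Y`.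
  have hout : ∀ i l, B i ⊆ Y → B l ⊆ {v | ¬ (v ∈ Y ∨ v ∈ P)} → l ≠ i ∧ ¬ H.Adj i l := by
    intro i l hi hl
    refine ⟨?_, fun hil => ?_⟩
    · rintro rfl
      obtain ⟨u, hu⟩ := hne l
      exact hl hu (Or.inl (hi hu))
    · obtain ⟨u, hu, v, hv, huv⟩ := hadj i l hil
      exact hl hv (hN u (hi hu) v huv)
  refine h7 (HasMinor.collapse hne hc hd hadj {v | ¬ (v ∈ Y ∨ v ∈ P)} P g 6
    (fun s hs h => h (Or.inr hs)) hP ?_ ?_ ?_ (fun _ _ => ⟨?_, h6P⟩) ?_)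
  · intro y hy z hyz
    by_cases hz : z ∈ P
    · exact Or.inr hz
    · refine Or.inl fun h => hy ?_
      exact hN z (h.resolve_right hz) y hyz.symm
  · exact fun u v hu hv => ginj u v (not_not.1 hu) (not_not.1 hv)
  · exact fun u v hu hv => ghom u v (not_not.1 hu) (not_not.1 hv)
  · exact fun u hu => hg6 u (not_not.1 hu)
  · exact fun l m hl hm => hH i j hij l m (hout i l hi hl).1 (hout j l hj hl).1 (hout i m hi hm).1
      (hout j m hj hm).1 (hout i l hi hl).2 (hout j l hj hl).2 (hout i m hi hm).2 (hout j m hj hm).2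

/-- Both triangles inside octahedra are contracted, first `7 8 9` and then `4 5 6`, so that an
`H`-minor of the gadget would survive in `gadget₂`. -/
lemma gadget_minor {W : Type*} {H : SimpleGraph W}
    (hH : ∀ i j, i ≠ j → ∀ l m, l ≠ i → l ≠ j → m ≠ i → m ≠ j → ¬ H.Adj i l → ¬ H.Adj j l →
      ¬ H.Adj i m → ¬ H.Adj j m → l = m)
    (h7 : ¬ HasMinor octahedron₇ H) (h6 : ¬ HasMinor gadget₂ H) : ¬ HasMinor gadget H := by
  intro hm
  have h1 : HasMinor gadget₁ H := by
    refine hm.contract_filling hH h7 {v | v ∈ [7, 8, 9]} {v | v ∈ [0, 2, 3]}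
      ![0, 1, 2, 3, 4, 5, 6, 7, 7, 7] 7 ![0, 6, 1, 2, 6, 6, 6, 3, 4, 5] ?_ ?_ ?_ ?_ ?_ ?_ ?_ ?_ ?_
      ?_ ?_ <;> simp only [Set.mem_ofPred_eq] <;> decide
  refine h6 (h1.contract_filling hH h7 {v | v ∈ [4, 5, 6]} {v | v ∈ [1, 2, 3]}
      ![0, 1, 2, 3, 4, 4, 4, 5] 4 ![6, 0, 1, 2, 3, 4, 5, 6] ?_ ?_ ?_ ?_ ?_ ?_ ?_ ?_ ?_
      ?_ ?_) <;> simp only [Set.mem_ofPred_eq] <;> decide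

/-! ### Gluing the gadgets -/

/-- The vertices of the glued graph: two poles, and the eight inner vertices of each of the sixteen
gadgets, which are indexed by pairs `(a, b)` of colors of the poles. -/
abbrev Vert := Fin 2 ⊕ (Fin 4 × Fin 4) × Fin 8

/-- The position of a vertex in its gadget. -/
def pos : Vert → Fin 10
  | .inl s => Fin.castLE (by decide) s
  | .inr (_, m) => Fin.natAdd 2 m

/-- Sixteen copies of the gadget, glued along the edge between the poles. -/
def glued : SimpleGraph Vert where
  Adj p q := gadget.Adj (pos p) (pos q) ∧ ∀ k m k' m', p = .inr (k, m) → q = .inr (k', m') → k = k'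
  symm := ⟨fun _ _ h => ⟨h.1.symm, fun k m k' m' hp hq => (h.2 k' m' k m hq hp).symm⟩⟩
  loopless := ⟨fun _ h => gadget.loopless.irrefl _ h.1⟩

/-- A graph `H` that stays connected (with diameter at most two) after the deletion of any two
vertices is a minor of the glued graph only if it is a minor of the gadget: all branch sets that
avoid the poles lie in the same gadget. -/
lemma glued_minor {W : Type*} [Nonempty W] {H : SimpleGraph W}
    (hH : ∀ s t i j, i = j ∨ H.Adj i j ∨ ∃ l, l ≠ s ∧ l ≠ t ∧ H.Adj i l ∧ H.Adj l j)
    (hm : HasMinor glued H) : HasMinor gadget H := by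
  obtain ⟨B, hne, hc, hd, hadj⟩ := hm
  have hcont : ∀ p : Vert, ∃ s, ∀ i, p ∈ B i → i = s := by
    intro p
    by_cases h : ∃ s, p ∈ B s
    · obtain ⟨s, hs⟩ := h
      refine ⟨s, fun i hi => ?_⟩
      by_contra hne
      exact Set.disjoint_left.1 (hd hne) hi hs
    · exact ⟨Classical.arbitrary W, fun i hi => absurd ⟨i, hi⟩ h⟩
  obtain ⟨s, hs⟩ := hcont (.inl 0)
  obtain ⟨t, ht⟩ := hcont (.inl 1)
  -- `F i` says that the branch set of `i` avoids the poles.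
  set F : W → Prop := fun i => ∀ c, Sum.inl c ∉ B i with hF
  have hFst : ∀ i, i ≠ s → i ≠ t → F i := by
    intro i his hit c hci
    fin_cases c
    · exact his (hs i hci)
    · exact hit (ht i hci)
  have hin : ∀ i, ∃ k, F i → ∀ p ∈ B i, ∃ m, p = .inr (k, m) := by
    intro i
    by_cases hi : F i
    · obtain ⟨p, hp⟩ := hne i
      rcases p with c | ⟨k, m⟩
      · exact absurd hp (hi c)
      refine ⟨k, fun _ => ?_⟩
      by_contra hnot
      obtain ⟨q, hq, c, rfl⟩ := meets_of_connected (hc i) (Y := {p : Vert | ∃ m, p = .inr (k, m)})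
        (S := {p : Vert | ∃ c, p = .inl c}) (by
          rintro _ ⟨m, rfl⟩ (c | ⟨k', m'⟩) h
          · exact Or.inr ⟨c, rfl⟩
          · exact Or.inl ⟨m', by rw [h.2 k m k' m' rfl rfl]⟩)
        ⟨_, hp, m, rfl⟩ (fun h => hnot fun p hp => h hp)
      exact hi c hq
    · exact ⟨0, fun h => absurd h hi⟩
  choose k hk using hin
  have hkadj : ∀ i j, F i → F j → H.Adj i j → k i = k j := by
    intro i j hi hj hij
    obtain ⟨u, hu, v, hv, huv⟩ := hadj i j hij
    obtain ⟨m, rfl⟩ := hk i hi u hu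
    obtain ⟨m', rfl⟩ := hk j hj v hv
    exact huv.2 _ m _ m' rfl rfl
  have hkall : ∀ i j, F i → F j → k i = k j := by
    intro i j hi hj
    rcases hH s t i j with rfl | h | ⟨l, hls, hlt, h1, h2⟩
    · rfl
    · exact hkadj i j hi hj h
    · have hl := hFst l hls hlt
      exact (hkadj i l hi hl h1).trans (hkadj l j hl hj h2)
  have hk0 : ∃ k₀, ∀ i, F i → k i = k₀ := by
    by_cases h : ∃ i, F i
    · obtain ⟨i, hi⟩ := h
      exact ⟨k i, fun j hj => hkall j i hj hi⟩
    · exact ⟨0, fun i hi => absurd ⟨i, hi⟩ h⟩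
  obtain ⟨k₀, hk₀⟩ := hk0
  have hnone : ∀ i, ¬ B i ⊆ {p | ∃ k' m, k' ≠ k₀ ∧ p = .inr (k', m)} := by
    intro i hi
    have hFi : F i := fun c hci => by
      obtain ⟨k', m, -, h⟩ := hi hci
      cases h
    obtain ⟨p, hp⟩ := hne i
    obtain ⟨m, rfl⟩ := hk i hFi p hp
    obtain ⟨k', m', hk', h⟩ := hi hp
    cases h
    exact hk' (hk₀ i hFi)
  refine HasMinor.collapse hne hc hd hadj {p | ∃ k' m, k' ≠ k₀ ∧ p = .inr (k', m)}
    {p | ∃ c, p = .inl c} pos 0 ?_ ?_ ?_ ?_ (fun u v _ _ h => h.1)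
    (fun i hi => absurd hi (hnone i)) (fun i _ hi => absurd hi (hnone i))
  · rintro _ ⟨c, rfl⟩ ⟨k', m, -, h⟩
    cases h
  · rintro _ ⟨c, rfl⟩ _ ⟨d, rfl⟩ hcd
    refine ⟨?_, by rintro k m k' m' h; cases h⟩
    have : c ≠ d := fun h => hcd (by rw [h])
    revert c d
    simp only [pos]
    decide
  · rintro _ ⟨k', m, hk', rfl⟩ (c | ⟨l, m'⟩) h
    · exact Or.inr ⟨c, rfl⟩
    · exact Or.inl ⟨l, m', h.2 _ m _ m' rfl rfl ▸ hk', rfl⟩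
  · rintro (c | ⟨l, m⟩) (d | ⟨l', m'⟩) hu hv h
    · exact congrArg _ (Fin.castLE_injective (by decide) h)
    · have := congrArg Fin.val h
      simp only [pos, Fin.val_castLE, Fin.val_natAdd] at this
      omega
    · have := congrArg Fin.val h
      simp only [pos, Fin.val_castLE, Fin.val_natAdd] at this
      omega
    · have hl : l = k₀ := by
        by_contra hne
        exact hu ⟨l, m, hne, rfl⟩
      have hl' : l' = k₀ := by
        by_contra hne
        exact hv ⟨l', m', hne, rfl⟩
      have hmm : m = m' := Fin.ext (by
        have := congrArg Fin.val h
        simpa [pos] using this)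
      rw [hl, hl', hmm]

lemma glued_planar : IsPlanar glued :=
  ⟨fun h => gadget_minor (by decide) octahedron₇_K5 gadget₂_K5 (glued_minor (by decide) h),
    fun h => gadget_minor (by simp [completeBipartiteGraph]; decide) octahedron₇_K33 gadget₂_K33
      (glued_minor (by simp [completeBipartiteGraph]; decide) h)⟩

/-! ### The lists -/

/-- The colors of the poles are `0, …, 3` and `4, …, 7`. The lists of the gadget with index `(a, b)`
are such that it cannot be colored when the poles receive `a` and `4 + b`. -/
def lists : Vert → Finset ℕ
  | .inl 0 => {0, 1, 2, 3}
  | .inl 1 => {4, 5, 6, 7}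
  | .inr ((a, b), m) => ![{a.val, 4 + b.val, 8, 9}, {a.val, 4 + b.val, 8, 9},
      {4 + b.val, 9, 10, 11}, {8, 9, 10, 11}, {4 + b.val, 8, 10, 11},
      {a.val, 8, 10, 11}, {8, 9, 10, 11}, {a.val, 9, 10, 11}] m

lemma card_lists : ∀ v, (lists v).card = 4 := by decide +kernel

/-- In the gadget indexed by the colors of the poles, the vertices `2` and `3` receive `8` and `9`
in some order. One order leaves only `10` and `11` to the triangle `7 8 9`, the other leaves only
`10` and `11` to the triangle `4 5 6`. -/
lemma glued_not_colorable : ¬ ∃ φ : Vert → ℕ, IsListColoring glued lists φ := by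
  rintro ⟨φ, hL, hφ⟩
  have hu := hL (.inl 0)
  have hv := hL (.inl 1)
  simp only [lists, Finset.mem_insert, Finset.mem_singleton] at hu hv
  obtain ⟨a, ha⟩ : ∃ a : Fin 4, φ (.inl 0) = a := ⟨⟨φ (.inl 0), by omega⟩, rfl⟩
  obtain ⟨b, hb⟩ : ∃ b : Fin 4, φ (.inl 1) = 4 + b := ⟨⟨φ (.inl 1) - 4, by omega⟩, by simp; omega⟩
  have hpole : ∀ s m, gadget.Adj (Fin.castLE (by decide) s) (Fin.natAdd 2 m) →
      φ (.inl s) ≠ φ (.inr ((a, b), m)) :=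
    fun s m h => hφ _ _ ⟨h, by rintro k m k' m' h; cases h⟩
  have hinner : ∀ m m', gadget.Adj (Fin.natAdd 2 m) (Fin.natAdd 2 m') →
      φ (.inr ((a, b), m)) ≠ φ (.inr ((a, b), m')) :=
    fun m m' h => hφ _ _ ⟨h, by rintro k m k' m' h h'; cases h; cases h'; rfl⟩
  have two : ∀ {x a b c d : ℕ}, x ∈ ({a, b, c, d} : Finset ℕ) → a ≠ x → b ≠ x → x = c ∨ x = d := by
    intro x a b c d h ha hb
    simp only [Finset.mem_insert, Finset.mem_singleton] at h
    exact (h.resolve_left ha.symm).resolve_left hb.symm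
  have three : ∀ {x y z : ℕ}, (x = 10 ∨ x = 11) → (y = 10 ∨ y = 11) → (z = 10 ∨ z = 11) →
      x ≠ y → y ≠ z → x ≠ z → False := by omega
  have h2 := two (hL (.inr ((a, b), 0))) (ha.symm.trans_ne <| hpole 0 0 (by decide))
    (hb.symm.trans_ne <| hpole 1 0 (by decide))
  have h3 := two (hL (.inr ((a, b), 1))) (ha.symm.trans_ne <| hpole 0 1 (by decide))
    (hb.symm.trans_ne <| hpole 1 1 (by decide))
  have h23 := hinner 0 1 (by decide)
  have hx : φ (.inr ((a, b), 0)) = 8 ∧ φ (.inr ((a, b), 1)) = 9 ∨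
      φ (.inr ((a, b), 0)) = 9 ∧ φ (.inr ((a, b), 1)) = 8 := by
    clear hu hv ha hb
    omega
  rcases hx with ⟨hx, hy⟩ | ⟨hx, hy⟩
  · exact three
      (two (hL (.inr ((a, b), 5))) (ha.symm.trans_ne <| hpole 0 5 (by decide))
        (hx.symm.trans_ne <| hinner 0 5 (by decide)))
      (two (hL (.inr ((a, b), 6))) (hx.symm.trans_ne <| hinner 0 6 (by decide))
        (hy.symm.trans_ne <| hinner 1 6 (by decide)))
      (two (hL (.inr ((a, b), 7))) (ha.symm.trans_ne <| hpole 0 7 (by decide))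
        (hy.symm.trans_ne <| hinner 1 7 (by decide)))
      (hinner 5 6 (by decide)) (hinner 6 7 (by decide)) (hinner 5 7 (by decide))
  · exact three
      (two (hL (.inr ((a, b), 2))) (hb.symm.trans_ne <| hpole 1 2 (by decide))
        (hx.symm.trans_ne <| hinner 0 2 (by decide)))
      (two (hL (.inr ((a, b), 3))) (hy.symm.trans_ne <| hinner 1 3 (by decide))
        (hx.symm.trans_ne <| hinner 0 3 (by decide)))
      (two (hL (.inr ((a, b), 4))) (hb.symm.trans_ne <| hpole 1 4 (by decide))
        (hy.symm.trans_ne <| hinner 1 4 (by decide)))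
      (hinner 2 3 (by decide)) (hinner 3 4 (by decide)) (hinner 2 4 (by decide))

/-- Voigt: there is a planar graph that is not 4-list colorable. -/
theorem stmt_18 :
    ∃ (n : ℕ) (G : SimpleGraph (Fin n)) (L : Fin n → Finset ℕ),
      IsPlanar G ∧ (∀ v, (L v).card = 4) ∧
      ¬ ∃ φ : Fin n → ℕ, IsListColoring G L φ := by
  let e := Fintype.equivFin Vert
  have hminor : ∀ {W : Type} {H : SimpleGraph W},
      HasMinor (glued.comap e.symm) H → HasMinor glued H := by
    rintro W H ⟨B, hne, hc, hd, hadj⟩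
    exact HasMinor.transfer hne hc hadj (fun _ => e.symm) (fun _ _ _ _ _ _ h => Or.inr h)
      fun i j hij u hu v hv h => Set.disjoint_left.1 (hd hij) hu (e.symm.injective h ▸ hv)
  refine ⟨_, glued.comap e.symm, lists ∘ e.symm,
    ⟨fun h => glued_planar.1 (hminor h), fun h => glued_planar.2 (hminor h)⟩,
    fun v => card_lists _, ?_⟩
  rintro ⟨φ, hL, hφ⟩
  refine glued_not_colorable ⟨φ ∘ e, fun v => ?_, fun u v huv => hφ _ _ ?_⟩
  · simpa using hL (e v)
  · simpa using huv
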